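/- In A_g (g ≥ 2, n ≥ 2), for 2 ≤ j ≤ n and any v_1⋯v_n in the basis β'_2 with v_j ∈ {x_j(p), y_j(p), ω_j : 1 ≤ p ≤ g}, the product v_1⋯v_n · x_j y_j vanishes. -/

import Mathlib

/-- Generators of the rational cohomology of the `n`-fold power of a genus-`g` surface:
`a i p`, `b i p` in degree 1 and `w i` (the class `ω_i`) in degree 2.  The indices are
`0`-based: `a i p` stands for the class `a_{i+1}(p+1)` of the paper. -/
inductive SurfGen (n g : ℕ) : Type
  | a (i : Fin n) (p : Fin g)
  | b (i : Fin n) (p : Fin g)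
  | w (i : Fin n)

/-- The cohomological degree of a generator. -/
def SurfGen.deg {n g : ℕ} : SurfGen n g → ℕ
  | .a _ _ => 1
  | .b _ _ => 1
  | .w _ => 2

open FreeAlgebra in
/-- The defining relations of `H^*(Σ_g^{×n}; ℚ)`: within each factor,
`a_i(p)a_i(q) = b_i(p)b_i(q) = 0`, `a_i(p)b_i(q) = δ_{pq} ω_i`, together with
graded (Koszul-signed) commutativity of the generators. -/
inductive SurfRel (n g : ℕ) :
    FreeAlgebra ℚ (SurfGen n g) → FreeAlgebra ℚ (SurfGen n g) → Prop
  | aa (i : Fin n) (p q : Fin g) :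
      SurfRel n g (ι ℚ (SurfGen.a i p) * ι ℚ (SurfGen.a i q)) 0
  | bb (i : Fin n) (p q : Fin g) :
      SurfRel n g (ι ℚ (SurfGen.b i p) * ι ℚ (SurfGen.b i q)) 0
  | ab_eq (i : Fin n) (p : Fin g) :
      SurfRel n g (ι ℚ (SurfGen.a i p) * ι ℚ (SurfGen.b i p)) (ι ℚ (SurfGen.w i))
  | ab_ne (i : Fin n) (p q : Fin g) : p ≠ q →
      SurfRel n g (ι ℚ (SurfGen.a i p) * ι ℚ (SurfGen.b i q)) 0
  | koszul (u v : SurfGen n g) :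
      SurfRel n g (ι ℚ u * ι ℚ v)
        (((-1 : ℚ) ^ (u.deg * v.deg)) • (ι ℚ v * ι ℚ u))

/-- `H^*(Σ_g^{×n}; ℚ)`, presented by generators and relations. -/
def SurfCoh (n g : ℕ) : Type := RingQuot (SurfRel n g)

noncomputable instance (n g : ℕ) : Ring (SurfCoh n g) :=
  inferInstanceAs (Ring (RingQuot (SurfRel n g)))

noncomputable instance (n g : ℕ) : Algebra ℚ (SurfCoh n g) :=
  inferInstanceAs (Algebra ℚ (RingQuot (SurfRel n g)))

/-- The class `a_{i+1}(p+1)`. -/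
noncomputable def gA {n g : ℕ} (i : Fin n) (p : Fin g) : SurfCoh n g :=
  RingQuot.mkAlgHom ℚ (SurfRel n g) (FreeAlgebra.ι ℚ (SurfGen.a i p))

/-- The class `b_{i+1}(p+1)`. -/
noncomputable def gB {n g : ℕ} (i : Fin n) (p : Fin g) : SurfCoh n g :=
  RingQuot.mkAlgHom ℚ (SurfRel n g) (FreeAlgebra.ι ℚ (SurfGen.b i p))

/-- The class `ω_{i+1}`. -/
noncomputable def gW {n g : ℕ} (i : Fin n) : SurfCoh n g :=
  RingQuot.mkAlgHom ℚ (SurfRel n g) (FreeAlgebra.ι ℚ (SurfGen.w i))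

/-- The class `x_{i+1}(p+1)`: equal to `a_{i+1}(p+1)` unless `p+1 = 1` and `i+1 ≥ 2`, in which
case it is `a_{i+1}(1) - a_1(1)`. -/
noncomputable def gX {n g : ℕ} [NeZero n] [NeZero g] (i : Fin n) (p : Fin g) : SurfCoh n g :=
  if p = 0 ∧ i ≠ 0 then gA i p - gA 0 p else gA i p

/-- The class `y_{i+1}(p+1)`: equal to `b_{i+1}(p+1)` unless `p+1 = 1` and `i+1 ≥ 2`, in which
case it is `b_{i+1}(1) - b_1(1)`. -/
noncomputable def gY {n g : ℕ} [NeZero n] [NeZero g] (i : Fin n) (p : Fin g) : SurfCoh n g :=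
  if p = 0 ∧ i ≠ 0 then gB i p - gB 0 p else gB i p

/-- The relations defining the quotient algebra `A_g`: all products
`x_i(p)x_j(q)`, `x_i(p)y_j(q)`, `y_i(p)y_j(q)` with `p, q ≥ 2` and `i ≠ j` are set to zero. -/
inductive ARel (n g : ℕ) [NeZero n] [NeZero g] : SurfCoh n g → SurfCoh n g → Prop
  | xx (i j : Fin n) (p q : Fin g) : i ≠ j → p ≠ 0 → q ≠ 0 → ARel n g (gX i p * gX j q) 0
  | xy (i j : Fin n) (p q : Fin g) : i ≠ j → p ≠ 0 → q ≠ 0 → ARel n g (gX i p * gY j q) 0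
  | yy (i j : Fin n) (p q : Fin g) : i ≠ j → p ≠ 0 → q ≠ 0 → ARel n g (gY i p * gY j q) 0

/-- The algebra `A_g`: the quotient of `H^*(Σ_g^{×n}; ℚ)` by the ideal generated by the
products `x_i(p)x_j(q)`, `x_i(p)y_j(q)`, `y_i(p)y_j(q)` with `p, q ≥ 2`, `i ≠ j`. -/
def SurfA (n g : ℕ) [NeZero n] [NeZero g] : Type := RingQuot (ARel n g)

noncomputable instance (n g : ℕ) [NeZero n] [NeZero g] : Ring (SurfA n g) :=
  inferInstanceAs (Ring (RingQuot (ARel n g)))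

noncomputable instance (n g : ℕ) [NeZero n] [NeZero g] : Algebra ℚ (SurfA n g) :=
  inferInstanceAs (Algebra ℚ (RingQuot (ARel n g)))

/-- The quotient map `H^*(Σ_g^{×n}; ℚ) → A_g`. -/
noncomputable def toA (n g : ℕ) [NeZero n] [NeZero g] : SurfCoh n g →ₐ[ℚ] SurfA n g :=
  RingQuot.mkAlgHom ℚ (ARel n g)

/-- The image of `x_{i+1} = x_{i+1}(1)` in `A_g`. -/
noncomputable def xA {n g : ℕ} [NeZero n] [NeZero g] (i : Fin n) : SurfA n g :=
  toA n g (gX i 0)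

/-- The image of `y_{i+1} = y_{i+1}(1)` in `A_g`. -/
noncomputable def yA {n g : ℕ} [NeZero n] [NeZero g] (i : Fin n) : SurfA n g :=
  toA n g (gY i 0)

/-- The image of `ω_{i+1}` in `A_g`. -/
noncomputable def wA {n g : ℕ} [NeZero n] [NeZero g] (i : Fin n) : SurfA n g :=
  toA n g (gW i)

/-- The possible letters occurring in the `i`-th slot of a basis monomial:
`1`, `a_i(p)` (resp. `x_i(p)`), `b_i(p)` (resp. `y_i(p)`), or `ω_i`. -/
inductive Letter (g : ℕ) : Type
  | one : Letter g
  | la (p : Fin g) : Letter g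
  | lb (p : Fin g) : Letter g
  | lw : Letter g

/-- A letter is *exceptional* if it lies in `{a_i(p), b_i(p), ω_i : 2 ≤ p ≤ g}`
(resp. `{x_i(p), y_i(p), ω_i : 2 ≤ p ≤ g}`). -/
def Letter.isExc {g : ℕ} [NeZero g] : Letter g → Prop
  | .one => False
  | .la p => p ≠ 0
  | .lb p => p ≠ 0
  | .lw => True

/-- Evaluation of a letter in the `i`-th slot using the generators `a, b, ω`. -/
noncomputable def Letter.evalAB {n g : ℕ} (i : Fin n) : Letter g → SurfCoh n g
  | .one => 1
  | .la p => gA i p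
  | .lb p => gB i p
  | .lw => gW i

/-- Evaluation of a letter in the `i`-th slot using the classes `x, y, ω`. -/
noncomputable def Letter.evalXY {n g : ℕ} [NeZero n] [NeZero g] (i : Fin n) :
    Letter g → SurfCoh n g
  | .one => 1
  | .la p => gX i p
  | .lb p => gY i p
  | .lw => gW i

/-- The monomial `u_1 ⋯ u_n` in `H^*(Σ_g^{×n}; ℚ)` associated to a choice of letters, using the
generators `a, b, ω`. -/
noncomputable def monAB {n g : ℕ} (v : Fin n → Letter g) : SurfCoh n g :=
  (List.ofFn fun i : Fin n => (v i).evalAB i).prod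

/-- The monomial `v_1 ⋯ v_n` in `H^*(Σ_g^{×n}; ℚ)` associated to a choice of letters, using the
classes `x, y, ω`. -/
noncomputable def monXY {n g : ℕ} [NeZero n] [NeZero g] (v : Fin n → Letter g) : SurfCoh n g :=
  (List.ofFn fun i : Fin n => (v i).evalXY i).prod

/-!
The product `x_j y_j` is even, so it can be moved through the monomial until it meets `v_j`, and it
suffices that `v_j x_j y_j = 0`.  For `v_j = x_j` or `y_j` this holds because odd elements square to
zero.  For `p ≥ 2`, the class `a_j(p)` annihilates both `a_j(1)` and `b_j(1)`, so in
`a_j(p) (a_j(1) - a_1(1)) (b_j(1) - b_1(1))` only `a_j(p) ω_1 = a_j(p) a_1(2) b_1(2)` survives,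
and `a_j(p) a_1(2)` is one of the relations of `A_g`; likewise for `b_j(p)`.  Finally
`ω_j = a_j(2) b_j(2)` reduces the remaining case to `v_j = b_j(2)`.
-/

theorem list_prod_mul_eq_zero_of_commute {M : Type*} [MonoidWithZero M] {l : List M} {z e : M}
    (hz : z ∈ l) (hcomm : ∀ u ∈ l, Commute u e) (hze : z * e = 0) : l.prod * e = 0 := by
  obtain ⟨s, t, rfl⟩ := List.append_of_mem hz
  have ht : t.prod * e = e * t.prod :=
    Commute.list_prod_left t e fun u hu ↦ hcomm u (by simp [hu])
  calc (s ++ z :: t).prod * e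
      = s.prod * (z * (t.prod * e)) := by simp only [List.prod_append, List.prod_cons, mul_assoc]
    _ = s.prod * (z * e * t.prod) := by rw [ht, mul_assoc]
    _ = 0 := by rw [hze, zero_mul, mul_zero]

theorem mul_sub_mul_sub_of_mul_eq_zero {R : Type*} [NonUnitalRing R] {u a a' b b' : R}
    (ha : u * a = 0) (hb : u * b = 0) (ha' : u * a' = -(a' * u)) :
    u * ((a - a') * (b - b')) = u * (a' * b') := by
  calc u * ((a - a') * (b - b'))
      = (u * a - u * a') * (b - b') := by rw [← mul_assoc, mul_sub u]
    _ = a' * (u * b - u * b') := by rw [ha, ha', zero_sub, neg_neg, mul_assoc, mul_sub]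
    _ = u * (a' * b') := by rw [hb, zero_sub, mul_neg, ← mul_assoc, ← neg_mul, ← ha', mul_assoc]

namespace SurfCoh

variable {n g : ℕ}

variable (n g) in
/-- The quotient map from the free algebra on the generators onto `H^*(Σ_g^{×n}; ℚ)`, used to
transport the defining relations to the classes `a_i(p)`, `b_i(p)`, `ω_i`. -/
noncomputable def mk : FreeAlgebra ℚ (SurfGen n g) →ₐ[ℚ] SurfCoh n g :=
  RingQuot.mkAlgHom ℚ (SurfRel n g)

theorem mk_eq_mk_of_rel {x y : FreeAlgebra ℚ (SurfGen n g)} (h : SurfRel n g x y) :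
    mk n g x = mk n g y :=
  RingQuot.mkAlgHom_rel ℚ h

variable (n g) in
/-- The degree-one part `H^1(Σ_g^{×n}; ℚ)`, as the span of the generators of degree one.  It
carries the anticommutation rules for the classes `x_i(p)` and `y_i(p)`, which are linear
combinations of generators. -/
noncomputable def degOne : Submodule ℚ (SurfCoh n g) :=
  Submodule.span ℚ ((fun u ↦ mk n g (FreeAlgebra.ι ℚ u)) '' {u | u.deg = 1})

theorem gA_mem_degOne (i : Fin n) (p : Fin g) : gA i p ∈ degOne n g :=
  Submodule.subset_span ⟨.a i p, rfl, rfl⟩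

theorem gB_mem_degOne (i : Fin n) (p : Fin g) : gB i p ∈ degOne n g :=
  Submodule.subset_span ⟨.b i p, rfl, rfl⟩

theorem mul_eq_neg_mul_of_mem_degOne {u v : SurfCoh n g} (hu : u ∈ degOne n g)
    (hv : v ∈ degOne n g) : u * v = -(v * u) := by
  induction hu, hv using Submodule.span_induction₂ with
  | mem_mem _ _ hs ht =>
    obtain ⟨s, hs : s.deg = 1, rfl⟩ := hs
    obtain ⟨t, ht : t.deg = 1, rfl⟩ := ht
    simpa only [hs, ht, mul_one, pow_one, neg_smul, one_smul, map_mul, map_neg] using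
      mk_eq_mk_of_rel (.koszul s t)
  | zero_left _ _ => rw [zero_mul, mul_zero, neg_zero]
  | zero_right _ _ => rw [zero_mul, mul_zero, neg_zero]
  | add_left _ _ _ _ _ _ h₁ h₂ => rw [add_mul, mul_add, h₁, h₂, neg_add]
  | add_right _ _ _ _ _ _ h₁ h₂ => rw [add_mul, mul_add, h₁, h₂, neg_add]
  | smul_left _ _ _ _ _ h => rw [smul_mul_assoc, mul_smul_comm, h, smul_neg]
  | smul_right _ _ _ _ _ h => rw [smul_mul_assoc, mul_smul_comm, h, smul_neg]

theorem mul_self_of_mem_degOne {u : SurfCoh n g} (hu : u ∈ degOne n g) : u * u = 0 :=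
  have : IsAddTorsionFree (SurfCoh n g) := .of_module_rat _
  self_eq_neg.1 (mul_eq_neg_mul_of_mem_degOne hu hu)

theorem commute_mul_of_mem_degOne {u x y : SurfCoh n g} (hu : u ∈ degOne n g)
    (hx : x ∈ degOne n g) (hy : y ∈ degOne n g) : Commute u (x * y) := by
  rw [commute_iff_eq, ← mul_assoc, mul_eq_neg_mul_of_mem_degOne hu hx, neg_mul, mul_assoc,
    mul_eq_neg_mul_of_mem_degOne hu hy, mul_neg, neg_neg, mul_assoc]

theorem gA_mul_gA (i : Fin n) (p q : Fin g) : (gA i p * gA i q : SurfCoh n g) = 0 :=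
  (map_mul (mk n g) _ _).symm.trans ((mk_eq_mk_of_rel (.aa i p q)).trans (map_zero _))

theorem gB_mul_gB (i : Fin n) (p q : Fin g) : (gB i p * gB i q : SurfCoh n g) = 0 :=
  (map_mul (mk n g) _ _).symm.trans ((mk_eq_mk_of_rel (.bb i p q)).trans (map_zero _))

theorem gA_mul_gB_self (i : Fin n) (p : Fin g) : (gA i p * gB i p : SurfCoh n g) = gW i :=
  (map_mul (mk n g) _ _).symm.trans (mk_eq_mk_of_rel (.ab_eq i p))

theorem gA_mul_gB_of_ne (i : Fin n) {p q : Fin g} (hpq : p ≠ q) :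
    (gA i p * gB i q : SurfCoh n g) = 0 :=
  (map_mul (mk n g) _ _).symm.trans ((mk_eq_mk_of_rel (.ab_ne i p q hpq)).trans (map_zero _))

theorem gB_mul_gA_of_ne (i : Fin n) {p q : Fin g} (hpq : p ≠ q) :
    (gB i p * gA i q : SurfCoh n g) = 0 := by
  rw [mul_eq_neg_mul_of_mem_degOne (gB_mem_degOne i p) (gA_mem_degOne i q),
    gA_mul_gB_of_ne i hpq.symm, neg_zero]

variable [NeZero n] [NeZero g]

theorem gX_of_ne_zero (i : Fin n) {p : Fin g} (hp : p ≠ 0) : (gX i p : SurfCoh n g) = gA i p :=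
  if_neg fun h ↦ hp h.1

theorem gY_of_ne_zero (i : Fin n) {p : Fin g} (hp : p ≠ 0) : (gY i p : SurfCoh n g) = gB i p :=
  if_neg fun h ↦ hp h.1

theorem gX_zero {j : Fin n} (hj : j ≠ 0) : (gX j 0 : SurfCoh n g) = gA j 0 - gA 0 0 :=
  if_pos ⟨rfl, hj⟩

theorem gY_zero {j : Fin n} (hj : j ≠ 0) : (gY j 0 : SurfCoh n g) = gB j 0 - gB 0 0 :=
  if_pos ⟨rfl, hj⟩

theorem gX_mem_degOne (i : Fin n) (p : Fin g) : gX i p ∈ degOne n g := by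
  unfold gX
  split_ifs
  exacts [sub_mem (gA_mem_degOne i p) (gA_mem_degOne 0 p), gA_mem_degOne i p]

theorem gY_mem_degOne (i : Fin n) (p : Fin g) : gY i p ∈ degOne n g := by
  unfold gY
  split_ifs
  exacts [sub_mem (gB_mem_degOne i p) (gB_mem_degOne 0 p), gB_mem_degOne i p]

theorem commute_evalXY_mul {x y : SurfCoh n g} (hx : x ∈ degOne n g) (hy : y ∈ degOne n g)
    (i : Fin n) (l : Letter g) : Commute (l.evalXY i) (x * y) := by
  cases l with
  | one => exact Commute.one_left _
  | la p => exact commute_mul_of_mem_degOne (gX_mem_degOne i p) hx hy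
  | lb p => exact commute_mul_of_mem_degOne (gY_mem_degOne i p) hx hy
  | lw =>
    rw [Letter.evalXY, ← gA_mul_gB_self i 0]
    exact (commute_mul_of_mem_degOne (gA_mem_degOne i 0) hx hy).mul_left
      (commute_mul_of_mem_degOne (gB_mem_degOne i 0) hx hy)

theorem gA_mul_gX_zero_mul_gY_zero {j : Fin n} (hj : j ≠ 0) {p : Fin g} (hp : p ≠ 0) :
    (gA j p * (gX j 0 * gY j 0) : SurfCoh n g) = gA j p * gW 0 := by
  rw [gX_zero hj, gY_zero hj, ← gA_mul_gB_self 0 0]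
  exact mul_sub_mul_sub_of_mul_eq_zero (gA_mul_gA j p 0) (gA_mul_gB_of_ne j hp)
    (mul_eq_neg_mul_of_mem_degOne (gA_mem_degOne j p) (gA_mem_degOne 0 0))

theorem gB_mul_gX_zero_mul_gY_zero {j : Fin n} (hj : j ≠ 0) {p : Fin g} (hp : p ≠ 0) :
    (gB j p * (gX j 0 * gY j 0) : SurfCoh n g) = gB j p * gW 0 := by
  rw [gX_zero hj, gY_zero hj, ← gA_mul_gB_self 0 0]
  exact mul_sub_mul_sub_of_mul_eq_zero (gB_mul_gA_of_ne j hp) (gB_mul_gB j p 0)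
    (mul_eq_neg_mul_of_mem_degOne (gB_mem_degOne j p) (gA_mem_degOne 0 0))

end SurfCoh

namespace SurfA

open SurfCoh

variable {n g : ℕ} [NeZero n] [NeZero g]

theorem toA_gA_mul_gA {i k : Fin n} (hik : i ≠ k) {p q : Fin g} (hp : p ≠ 0) (hq : q ≠ 0) :
    toA n g (gA i p * gA k q) = 0 := by
  rw [← gX_of_ne_zero i hp, ← gX_of_ne_zero k hq]
  exact (RingQuot.mkAlgHom_rel ℚ (ARel.xx i k p q hik hp hq)).trans (map_zero _)

theorem toA_gB_mul_gA {i k : Fin n} (hik : i ≠ k) {p q : Fin g} (hp : p ≠ 0) (hq : q ≠ 0) :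
    toA n g (gB i p * gA k q) = 0 := by
  rw [mul_eq_neg_mul_of_mem_degOne (gB_mem_degOne i p) (gA_mem_degOne k q), map_neg, neg_eq_zero,
    ← gX_of_ne_zero k hq, ← gY_of_ne_zero i hp]
  exact (RingQuot.mkAlgHom_rel ℚ (ARel.xy k i q p hik.symm hq hp)).trans (map_zero _)

variable [Nontrivial (Fin g)]

theorem toA_gA_mul_gW {i k : Fin n} (hik : i ≠ k) {p : Fin g} (hp : p ≠ 0) :
    toA n g (gA i p * gW k) = 0 := by
  obtain ⟨r, hr⟩ := exists_ne (0 : Fin g)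
  rw [← gA_mul_gB_self k r, ← mul_assoc, map_mul, toA_gA_mul_gA hik hp hr, zero_mul]

theorem toA_gB_mul_gW {i k : Fin n} (hik : i ≠ k) {p : Fin g} (hp : p ≠ 0) :
    toA n g (gB i p * gW k) = 0 := by
  obtain ⟨r, hr⟩ := exists_ne (0 : Fin g)
  rw [← gA_mul_gB_self k r, ← mul_assoc, map_mul, toA_gB_mul_gA hik hp hr, zero_mul]

theorem toA_gX_mul_gX_zero_mul_gY_zero {j : Fin n} (hj : j ≠ 0) (p : Fin g) :
    toA n g (gX j p * (gX j 0 * gY j 0)) = 0 := by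
  obtain rfl | hp := eq_or_ne p 0
  · rw [← mul_assoc, mul_self_of_mem_degOne (gX_mem_degOne j 0), zero_mul, map_zero]
  · rw [gX_of_ne_zero j hp, gA_mul_gX_zero_mul_gY_zero hj hp, toA_gA_mul_gW hj hp]

theorem toA_gY_mul_gX_zero_mul_gY_zero {j : Fin n} (hj : j ≠ 0) (p : Fin g) :
    toA n g (gY j p * (gX j 0 * gY j 0)) = 0 := by
  obtain rfl | hp := eq_or_ne p 0
  · rw [(commute_mul_of_mem_degOne (gY_mem_degOne j 0) (gX_mem_degOne j 0)
      (gY_mem_degOne j 0)).eq, mul_assoc, mul_self_of_mem_degOne (gY_mem_degOne j 0), mul_zero,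
      map_zero]
  · rw [gY_of_ne_zero j hp, gB_mul_gX_zero_mul_gY_zero hj hp, toA_gB_mul_gW hj hp]

theorem toA_gW_mul_gX_zero_mul_gY_zero {j : Fin n} (hj : j ≠ 0) :
    toA n g (gW j * (gX j 0 * gY j 0)) = 0 := by
  obtain ⟨r, hr⟩ := exists_ne (0 : Fin g)
  rw [← gA_mul_gB_self j r, mul_assoc, map_mul, ← gY_of_ne_zero j hr,
    toA_gY_mul_gX_zero_mul_gY_zero hj r, mul_zero]

theorem toA_evalXY_mul_gX_zero_mul_gY_zero {j : Fin n} (hj : j ≠ 0) {l : Letter g}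
    (hl : l ≠ .one) : toA n g (l.evalXY j * (gX j 0 * gY j 0)) = 0 := by
  cases l with
  | one => exact absurd rfl hl
  | la p => exact toA_gX_mul_gX_zero_mul_gY_zero hj p
  | lb p => exact toA_gY_mul_gX_zero_mul_gY_zero hj p
  | lw => exact toA_gW_mul_gX_zero_mul_gY_zero hj

end SurfA

theorem stmt8_general (n g : ℕ) [NeZero n] [NeZero g] (hg : 2 ≤ g) (j : Fin n) (hj : j ≠ 0)
    (v : Fin n → Letter g) (hvj : v j ≠ Letter.one) :
    toA n g (monXY v) * (xA j * yA j) = 0 := by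
  have : Nontrivial (Fin g) := Fin.nontrivial_iff_two_le.2 hg
  rw [xA, yA, ← map_mul, monXY, map_list_prod]
  refine list_prod_mul_eq_zero_of_commute (z := toA n g ((v j).evalXY j))
    (List.mem_map_of_mem (List.mem_ofFn.2 ⟨j, rfl⟩)) ?_ ?_
  · simp only [List.forall_mem_map, List.forall_mem_ofFn_iff]
    exact fun i ↦ (SurfCoh.commute_evalXY_mul (SurfCoh.gX_mem_degOne j 0)
      (SurfCoh.gY_mem_degOne j 0) i (v i)).map (toA n g)
  · rw [← map_mul, SurfA.toA_evalXY_mul_gX_zero_mul_gY_zero hj hvj]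

/-- In `A_g` (`g ≥ 2`, `n ≥ 2`), for `2 ≤ j ≤ n` and any element
`v_1 ⋯ v_n` of the basis `β'₂` whose `j`-th letter `v_j` lies in
`{x_j(p), y_j(p), ω_j : 1 ≤ p ≤ g}`, the product `v_1 ⋯ v_n · x_j y_j` vanishes in `A_g`. -/
theorem stmt8 (n g : ℕ) [NeZero n] [NeZero g] (hn : 2 ≤ n) (hg : 2 ≤ g)
    (j : Fin n) (hj : j ≠ 0) (v : Fin n → Letter g)
    (hbasis : {i : Fin n | (v i).isExc}.Subsingleton)
    (hvj : v j ≠ Letter.one) :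
    toA n g (monXY v) * (xA j * yA j) = 0 :=
  stmt8_general n g hg j hj v hvj
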